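/- Energy monotonicity and a priori bounds for the nonlocal Allen–Cahn equation: the function t ↦ E^ε(t) is nonincreasing on [0,T]; moreover ε ∫₀ᵀ ∫_Q (∂ₜφ(x,t))² dx dt ≤ E^ε(0), and |λ(t)| ≤ ε^{−α/2} √(2 E^ε(0)) for every t ∈ [0,T]. -/

import Mathlib

open MeasureTheory Real Function
open scoped RealInnerProductSpace

noncomputable section

abbrev Euc (d : ℕ) := EuclideanSpace ℝ (Fin d)

/-- The double-well potential `W(s) = (1-s²)²/2`. -/
def W (s : ℝ) : ℝ := (1 - s ^ 2) ^ 2 / 2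

/-- Its derivative `W'(s) = -2s(1-s²)`. -/
def Wp (s : ℝ) : ℝ := -2 * s * (1 - s ^ 2)

/-- `k(s) = ∫₀ˢ √(2W(r)) dr`. -/
def kfun (s : ℝ) : ℝ := ∫ r in (0:ℝ)..s, Real.sqrt (2 * W r)

/-- The unit cell `Q = [0,1)^d`. -/
def Qcell (d : ℕ) : Set (Euc d) := {x | ∀ i, x i ∈ Set.Ico (0:ℝ) 1}

/-- The Laplacian (sum of second partial derivatives). -/
def lap {d : ℕ} (f : Euc d → ℝ) (x : Euc d) : ℝ :=
  ∑ i : Fin d, fderiv ℝ (fun y => fderiv ℝ f y (EuclideanSpace.single i 1)) x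
    (EuclideanSpace.single i 1)

/-- The total energy `E^ε(t) = E_S^ε(t) + E_P^ε(t)`. -/
def Eeps (d : ℕ) (ε α : ℝ) (φ : Euc d → ℝ → ℝ) (lam : ℝ → ℝ) (t : ℝ) : ℝ :=
  (∫ x in Qcell d, (ε * ‖gradient (fun y => φ y t) x‖ ^ 2 / 2 + W (φ x t) / ε)) +
    ε ^ α / 2 * lam t ^ 2

/-!
Testing the equation with `∂ₜφ` gives an exact energy balance. Green's identity on the periodic cell
turns `∫ ⟪∇φ, ∇∂ₜφ⟫` into `-∫ ∂ₜφ Δφ`, so the surface energy has derivative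
`∫ (-ε Δφ + W'(φ)/ε) ∂ₜφ`. Since `λ = ε^(-α) (∫ k(φ(0)) - ∫ k(φ(t)))` and `k' = √(2W)`, the penalty
energy has derivative `-λ ∫ √(2W(φ)) ∂ₜφ`. By the equation the two add up to `-ε ∫ (∂ₜφ)²`, hence
`E(t) + ε ∫ₛᵗ ∫ (∂ₜφ)² = E(s)`, and the claims follow because both energies are nonnegative.
-/

section IntegralOverCompact

variable {X F : Type*} [TopologicalSpace X] [T2Space X] [MeasurableSpace X]
  [OpensMeasurableSpace X] {μ : Measure X} [IsFiniteMeasureOnCompacts μ]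
  [NormedAddCommGroup F] [NormedSpace ℝ F]

theorem hasDerivAt_setIntegral_of_isCompact {K : Set X} (hK : IsCompact K) {g g' : X → ℝ → F}
    (hg : ∀ t, Continuous fun x => g x t) (hg' : Continuous (uncurry g'))
    (hderiv : ∀ x t, HasDerivAt (g x) (g' x t) t) (t : ℝ) :
    HasDerivAt (fun s => ∫ x in K, g x s ∂μ) (∫ x in K, g' x t ∂μ) t := by
  have integrable_of_continuous {f : X → F} (hf : Continuous f) : IntegrableOn f K μ :=
    hf.continuousOn.integrableOn_compact hK
  obtain ⟨C, hC⟩ := (hK.prod (isCompact_Icc (a := t - 1) (b := t + 1))).exists_bound_of_continuousOn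
    hg'.continuousOn
  refine (hasDerivAt_integral_of_dominated_loc_of_deriv_le (F := fun s x => g x s)
    (F' := fun s x => g' x s) (bound := fun _ => C) (s := Set.Icc (t - 1) (t + 1))
    (Icc_mem_nhds (by linarith) (by linarith)) ?_ (integrable_of_continuous (hg t)) ?_ ?_
    (integrableOn_const hK.measure_ne_top) ?_).2
  · exact .of_forall fun s => (integrable_of_continuous (hg s)).aestronglyMeasurable
  · exact (integrable_of_continuous
      (hg'.comp (Continuous.prodMk_left t))).aestronglyMeasurable
  · filter_upwards [ae_restrict_mem hK.measurableSet] with x hx s hs using hC (x, s) ⟨hx, hs⟩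
  · exact .of_forall fun x s _ => hderiv x s

end IntegralOverCompact

section UnitCell

variable {d : ℕ}

/-- The closed unit cell `[0,1]^d`. It agrees with `Qcell d` up to a null set and, unlike it, is
compact. -/
def closedCell (d : ℕ) : Set (Euc d) := WithLp.ofLp ⁻¹' Set.Icc (0 : Fin d → ℝ) 1

theorem isCompact_closedCell : IsCompact (closedCell d) :=
  (PiLp.homeomorph 2 fun _ : Fin d => ℝ).isCompact_preimage.2 isCompact_Icc

theorem Qcell_ae_eq_closedCell : Qcell d =ᵐ[volume] closedCell d := by
  have hQ : Qcell d = WithLp.ofLp ⁻¹' (Set.univ.pi fun _ => Set.Ico (0 : ℝ) 1) := by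
    ext x
    simp [Qcell]
  rw [hQ]
  exact (PiLp.volume_preserving_ofLp (Fin d)).quasiMeasurePreserving.preimage_ae_eq
    (Measure.univ_pi_Ico_ae_eq_Icc (f := (0 : Fin d → ℝ)) (g := 1))

theorem setIntegral_Qcell_eq_closedCell {F : Type*} [NormedAddCommGroup F] [NormedSpace ℝ F]
    (g : Euc d → F) : ∫ x in Qcell d, g x = ∫ x in closedCell d, g x :=
  setIntegral_congr_set Qcell_ae_eq_closedCell

theorem setIntegral_closedCell {F : Type*} [NormedAddCommGroup F] [NormedSpace ℝ F]
    (g : Euc d → F) :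
    ∫ x in closedCell d, g x = ∫ y in Set.Icc (0 : Fin d → ℝ) 1, g (WithLp.toLp 2 y) :=
  (PiLp.volume_preserving_ofLp (Fin d)).setIntegral_preimage_emb
    (MeasurableEquiv.toLp 2 (Fin d → ℝ)).symm.measurableEmbedding (fun y => g (WithLp.toLp 2 y)) _

theorem integrableOn_Qcell {F : Type*} [NormedAddCommGroup F] {g : Euc d → F}
    (hg : Continuous g) : IntegrableOn g (Qcell d) :=
  (hg.continuousOn.integrableOn_compact isCompact_closedCell).congr_set_ae Qcell_ae_eq_closedCell

theorem hasDerivAt_setIntegral_Qcell {F : Type*} [NormedAddCommGroup F] [NormedSpace ℝ F]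
    {g g' : Euc d → ℝ → F} (hg : ∀ t, Continuous fun x => g x t) (hg' : Continuous (uncurry g'))
    (hderiv : ∀ x t, HasDerivAt (g x) (g' x t) t) (t : ℝ) :
    HasDerivAt (fun s => ∫ x in Qcell d, g x s) (∫ x in Qcell d, g' x t) t := by
  simp only [setIntegral_Qcell_eq_closedCell]
  exact hasDerivAt_setIntegral_of_isCompact isCompact_closedCell hg hg' hderiv t

theorem continuous_setIntegral_Qcell {F X : Type*} [NormedAddCommGroup F] [NormedSpace ℝ F]
    [TopologicalSpace X] [FirstCountableTopology X] [LocallyCompactSpace X]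
    {g : Euc d → X → F} (hg : Continuous (uncurry g)) :
    Continuous fun s => ∫ x in Qcell d, g x s := by
  simp only [setIntegral_Qcell_eq_closedCell]
  exact continuous_parametric_integral_of_continuous (f := fun s x => g x s)
    (hg.comp continuous_swap) isCompact_closedCell

end UnitCell

section PeriodicIntegration

variable {d : ℕ}

theorem periodic_single_of_periodic_int {Y : Type*} {f : Euc d → Y}
    (hf : ∀ (x : Euc d) (z : Fin d → ℤ), f (x + WithLp.toLp 2 fun i => (z i : ℝ)) = f x)
    (i : Fin d) : Periodic f (EuclideanSpace.single i 1) := by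
  intro x
  rw [← hf x (Pi.single i 1)]
  congr 2
  ext j
  obtain rfl | hij := eq_or_ne j i <;> simp [*]

theorem periodic_fderiv {𝕜 E F : Type*} [NontriviallyNormedField 𝕜] [NormedAddCommGroup E]
    [NormedSpace 𝕜 E] [NormedAddCommGroup F] [NormedSpace 𝕜 F] {f : E → F} {c : E}
    (hf : Periodic f c) : Periodic (fderiv 𝕜 f) c := by
  intro x
  rw [← fderiv_comp_add_right, hf.funext]

theorem setIntegral_Qcell_divergence_eq_zero {F : Type*} [NormedAddCommGroup F] [NormedSpace ℝ F]
    {f : Fin d → Euc d → F} (hf : ∀ i, ContDiff ℝ 1 (f i))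
    (hper : ∀ i, Periodic (f i) (EuclideanSpace.single i 1)) :
    ∫ x in Qcell d, ∑ i, fderiv ℝ (f i) x (EuclideanSpace.single i 1) = 0 := by
  obtain _ | n := d
  · simp
  let L : (Fin (n + 1) → ℝ) →L[ℝ] Euc (n + 1) := (EuclideanSpace.equiv (Fin (n + 1)) ℝ).symm
  have integrable_divergence : IntegrableOn
      (fun y => ∑ i, ((fderiv ℝ (f i) (L y)).comp L) (Pi.single i 1))
      (Set.Icc (0 : Fin (n + 1) → ℝ) 1) := by
    refine (continuous_finsetSum _ fun i _ => ?_).continuousOn.integrableOn_compact isCompact_Icc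
    exact (((hf i).continuous_fderiv one_ne_zero).comp L.continuous).clm_apply continuous_const
  rw [setIntegral_Qcell_eq_closedCell, setIntegral_closedCell]
  refine (integral_divergence_of_hasFDerivAt_off_countable' 0 1 zero_le_one (fun i y => f i (L y))
    (fun i y => (fderiv ℝ (f i) (L y)).comp L) ∅ Set.countable_empty
    (fun i => ((hf i).continuous.comp L.continuous).continuousOn)
    (fun y _ i => ((hf i).differentiable one_ne_zero (L y)).hasFDerivAt.comp y L.hasFDerivAt)
    integrable_divergence).trans (Finset.sum_eq_zero fun i _ => sub_eq_zero.2 ?_)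
  have front_eq_back_add (y : Fin n → ℝ) :
      L (i.insertNth 1 y) = L (i.insertNth 0 y) + EuclideanSpace.single i 1 := by
    ext j
    change (i.insertNth 1 y : Fin (n + 1) → ℝ) j = (i.insertNth 0 y : Fin (n + 1) → ℝ) j
      + EuclideanSpace.single i (1 : ℝ) j
    refine Fin.succAboveCases i ?_ (fun j => ?_) j <;> simp
  refine integral_congr_ae (.of_forall fun y => ?_)
  exact (congrArg (f i) (front_eq_back_add y)).trans (hper i _)

theorem gradient_apply_eq_fderiv_single (f : Euc d → ℝ) (x : Euc d) (i : Fin d) :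
    gradient f x i = fderiv ℝ f x (EuclideanSpace.single i 1) := by
  rw [← inner_gradient_left, EuclideanSpace.inner_single_right]
  simp

theorem continuous_lap {u : Euc d → ℝ} (hu : ContDiff ℝ 2 u) : Continuous (lap u) := by
  have hu' (i : Fin d) : ContDiff ℝ 1 fun y => fderiv ℝ u y (EuclideanSpace.single i 1) :=
    (hu.fderiv_right le_rfl).clm_apply contDiff_const
  exact continuous_finsetSum _ fun i _ =>
    ((hu' i).continuous_fderiv one_ne_zero).clm_apply continuous_const

theorem continuous_gradient {E : Type*} [NormedAddCommGroup E] [InnerProductSpace ℝ E]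
    [CompleteSpace E] {u : E → ℝ} (hu : ContDiff ℝ 1 u) : Continuous (gradient u) :=
  (InnerProductSpace.toDual ℝ E).symm.continuous.comp (hu.continuous_fderiv one_ne_zero)

theorem sum_fderiv_mul_fderiv_single {u v : Euc d → ℝ} (hu : ContDiff ℝ 2 u)
    (hv : Differentiable ℝ v) (x : Euc d) :
    ∑ i, fderiv ℝ (fun y => v y * fderiv ℝ u y (EuclideanSpace.single i 1)) x
        (EuclideanSpace.single i 1) =
      v x * lap u x + ⟪gradient u x, gradient v x⟫ := by
  have hu' (i : Fin d) :
      DifferentiableAt ℝ (fun y => fderiv ℝ u y (EuclideanSpace.single i 1)) x :=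
    ((hu.fderiv_right le_rfl).clm_apply contDiff_const).differentiable one_ne_zero x
  simp only [lap, PiLp.inner_apply, gradient_apply_eq_fderiv_single, Finset.mul_sum,
    ← Finset.sum_add_distrib]
  refine Finset.sum_congr rfl fun i _ => ?_
  rw [fderiv_fun_mul (hv x) (hu' i)]
  simp [mul_comm]

theorem setIntegral_Qcell_mul_lap {u v : Euc d → ℝ} (hu : ContDiff ℝ 2 u) (hv : ContDiff ℝ 1 v)
    (hu_per : ∀ i, Periodic u (EuclideanSpace.single i 1))
    (hv_per : ∀ i, Periodic v (EuclideanSpace.single i 1)) :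
    ∫ x in Qcell d, v x * lap u x = -∫ x in Qcell d, ⟪gradient u x, gradient v x⟫ := by
  have hdiv := setIntegral_Qcell_divergence_eq_zero
    (f := fun i y => v y * fderiv ℝ u y (EuclideanSpace.single i 1))
    (fun i => hv.mul ((hu.fderiv_right le_rfl).clm_apply contDiff_const))
    (fun i x => by simp only [hv_per i x, periodic_fderiv (hu_per i) x])
  simp only [sum_fderiv_mul_fderiv_single hu (hv.differentiable one_ne_zero)] at hdiv
  have integrable_mul_lap : IntegrableOn (fun x => v x * lap u x) (Qcell d) :=
    integrableOn_Qcell (hv.continuous.mul (continuous_lap hu))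
  have integrable_inner : IntegrableOn (fun x => ⟪gradient u x, gradient v x⟫) (Qcell d) :=
    integrableOn_Qcell ((continuous_gradient (hu.of_le one_le_two)).inner (continuous_gradient hv))
  rw [integral_add integrable_mul_lap integrable_inner] at hdiv
  exact eq_neg_of_add_eq_zero_left hdiv

end PeriodicIntegration

section SpaceTime

variable {E F : Type*} [NormedAddCommGroup E] [NormedSpace ℝ E] [NormedAddCommGroup F]
  [NormedSpace ℝ F]

theorem contDiff_deriv_slice {φ : E → ℝ → F} {n : WithTop ℕ∞}
    (hφ : ContDiff ℝ (n + 1) (uncurry φ)) :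
    ContDiff ℝ n (uncurry fun x t => deriv (φ x) t) :=
  (ContDiff.fderiv (f := fun p : E × ℝ => φ p.1) (g := Prod.snd)
    (hφ.comp (contDiff_fst.fst.prodMk contDiff_snd)) contDiff_snd le_rfl).clm_apply contDiff_const

theorem contDiff_fderiv_slice {φ : E → ℝ → F} {n : WithTop ℕ∞}
    (hφ : ContDiff ℝ (n + 1) (uncurry φ)) :
    ContDiff ℝ n (uncurry fun x t => fderiv ℝ (fun y => φ y t) x) :=
  ContDiff.fderiv (f := fun (p : E × ℝ) y => φ y p.2) (g := Prod.fst)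
    (hφ.comp (contDiff_snd.prodMk contDiff_fst.snd)) contDiff_fst le_rfl

theorem hasDerivAt_comp_prodMk_right {f : E × ℝ → F} {x : E} {t : ℝ}
    (hf : DifferentiableAt ℝ f (x, t)) :
    HasDerivAt (fun s => f (x, s)) (fderiv ℝ f (x, t) (0, 1)) t :=
  hf.hasFDerivAt.comp_hasDerivAt t ((hasDerivAt_const t x).prodMk (hasDerivAt_id t))

theorem hasFDerivAt_comp_prodMk_left {f : E × ℝ → F} {x : E} {t : ℝ}
    (hf : DifferentiableAt ℝ f (x, t)) :
    HasFDerivAt (fun y => f (y, t)) ((fderiv ℝ f (x, t)).comp (.inl ℝ E ℝ)) x :=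
  hf.hasFDerivAt.comp (f := fun y => (y, t)) x (hasFDerivAt_prodMk_left x t)

theorem hasDerivAt_fderiv_slice {φ : E → ℝ → F}
    (hφ : ContDiff ℝ 2 (uncurry φ)) (x : E) (t : ℝ) :
    HasDerivAt (fun s => fderiv ℝ (fun y => φ y s) x)
      (fderiv ℝ (fun y => deriv (φ y) t) x) t := by
  have hφ_diff : Differentiable ℝ (uncurry φ) := hφ.differentiable two_ne_zero
  have hDφ_diff : DifferentiableAt ℝ (fderiv ℝ (uncurry φ)) (x, t) :=
    (hφ.fderiv_right le_rfl).differentiable one_ne_zero _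
  have fderiv_space s :
      fderiv ℝ (fun y => φ y s) x = (fderiv ℝ (uncurry φ) (x, s)).comp (.inl ℝ E ℝ) :=
    (hasFDerivAt_comp_prodMk_left (hφ_diff (x, s))).fderiv
  have deriv_time : (fun y => deriv (φ y) t) = fun y => fderiv ℝ (uncurry φ) (y, t) (0, 1) :=
    funext fun y => (hasDerivAt_comp_prodMk_right (hφ_diff (y, t))).deriv
  have symm : IsSymmSndFDerivAt ℝ (uncurry φ) (x, t) :=
    hφ.contDiffAt.isSymmSndFDerivAt (by simp)
  simp only [fderiv_space, deriv_time]
  refine ((hasDerivAt_comp_prodMk_right hDφ_diff).clm_comp (hasDerivAt_const t _)).congr_deriv ?_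
  ext e
  rw [((hasFDerivAt_comp_prodMk_left hDφ_diff).clm_apply (hasFDerivAt_const _ x)).fderiv]
  simpa using symm (0, 1) (e, 0)

end SpaceTime

section Gradient

variable {E : Type*} [NormedAddCommGroup E] [InnerProductSpace ℝ E] [CompleteSpace E]

theorem hasDerivAt_gradient_slice {φ : E → ℝ → ℝ} (hφ : ContDiff ℝ 2 (uncurry φ)) (x : E) (t : ℝ) :
    HasDerivAt (fun s => gradient (fun y => φ y s) x) (gradient (fun y => deriv (φ y) t) x) t :=
  (InnerProductSpace.toDual ℝ E).symm.toContinuousLinearEquiv.hasFDerivAt.comp_hasDerivAt t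
    (hasDerivAt_fderiv_slice hφ x t)

theorem continuous_gradient_slice {φ : E → ℝ → ℝ} (hφ : ContDiff ℝ 1 (uncurry φ)) :
    Continuous (uncurry fun x t => gradient (fun y => φ y t) x) :=
  (InnerProductSpace.toDual ℝ E).symm.continuous.comp
    (contDiff_fderiv_slice (n := 0) (by simpa using hφ)).continuous

end Gradient

section Energy

variable {d : ℕ} {ε α : ℝ} {V V' k g lam : ℝ → ℝ} {φ : Euc d → ℝ → ℝ}

/-- The diffuse surface (Modica–Mortola) energy `∫_Q ε|∇u|²/2 + V(u)/ε` of a profile `u`, for an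
arbitrary potential `V`. -/
def surfaceEnergy (V : ℝ → ℝ) (ε : ℝ) (u : Euc d → ℝ) : ℝ :=
  ∫ x in Qcell d, (ε * ‖gradient u x‖ ^ 2 / 2 + V (u x) / ε)

/-- The surface energy of `φ(·,t)` plus the penalty `(ε^α/2) λ(t)²`. For `V = W` this is `Eeps`
definitionally. -/
def penalizedEnergy (V : ℝ → ℝ) (ε α : ℝ) (φ : Euc d → ℝ → ℝ) (lam : ℝ → ℝ) (t : ℝ) : ℝ :=
  surfaceEnergy V ε (fun y => φ y t) + ε ^ α / 2 * lam t ^ 2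

theorem surfaceEnergy_nonneg (hε : 0 ≤ ε) (hV : ∀ s, 0 ≤ V s) (u : Euc d → ℝ) :
    0 ≤ surfaceEnergy V ε u :=
  integral_nonneg fun x =>
    add_nonneg (by positivity) (div_nonneg (hV (u x)) hε)

theorem penalty_le_penalizedEnergy (hε : 0 ≤ ε) (hV : ∀ s, 0 ≤ V s) (t : ℝ) :
    ε ^ α / 2 * lam t ^ 2 ≤ penalizedEnergy V ε α φ lam t :=
  le_add_of_nonneg_left (surfaceEnergy_nonneg hε hV _)

theorem penalizedEnergy_nonneg (hε : 0 ≤ ε) (hV : ∀ s, 0 ≤ V s) (t : ℝ) :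
    0 ≤ penalizedEnergy V ε α φ lam t :=
  le_trans (by positivity) (penalty_le_penalizedEnergy hε hV t)

theorem abs_le_rpow_mul_sqrt_of_penalty_le (hε : 0 < ε) {l E : ℝ} (h : ε ^ α / 2 * l ^ 2 ≤ E) :
    |l| ≤ ε ^ (-(α / 2)) * √(2 * E) := by
  have hsqrt : √(ε ^ (-α)) = ε ^ (-(α / 2)) := by
    rw [Real.sqrt_eq_rpow, ← Real.rpow_mul hε.le]
    ring_nf
  have hsq : l ^ 2 ≤ ε ^ (-α) * (2 * E) := by
    rw [Real.rpow_neg hε.le, inv_mul_eq_div, le_div_iff₀ (Real.rpow_pos_of_pos hε α)]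
    linarith
  calc |l| ≤ √(ε ^ (-α) * (2 * E)) := Real.abs_le_sqrt hsq
    _ = ε ^ (-(α / 2)) * √(2 * E) := by rw [Real.sqrt_mul (by positivity), hsqrt]

theorem hasDerivAt_setIntegral_Qcell_comp (hφ : ContDiff ℝ 1 (uncurry φ))
    (hk : ∀ s, HasDerivAt k (g s) s) (hg : Continuous g) (t : ℝ) :
    HasDerivAt (fun s => ∫ x in Qcell d, k (φ x s))
      (∫ x in Qcell d, g (φ x t) * deriv (φ x) t) t := by
  have hk_cont : Continuous k := continuous_iff_continuousAt.2 fun s => (hk s).continuousAt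
  have hφt : Continuous (uncurry fun x t => deriv (φ x) t) :=
    (contDiff_deriv_slice (n := 0) (by simpa using hφ)).continuous
  have hφx (x : Euc d) : Differentiable ℝ (φ x) := fun s =>
    (hasDerivAt_comp_prodMk_right (hφ.differentiable one_ne_zero (x, s))).differentiableAt
  exact hasDerivAt_setIntegral_Qcell (g := fun x s => k (φ x s))
    (g' := fun x s => g (φ x s) * deriv (φ x) s)
    (fun t => hk_cont.comp (hφ.continuous.comp (Continuous.prodMk_left t)))
    ((hg.comp hφ.continuous).mul hφt) (fun x s => (hk _).comp s (hφx x s).hasDerivAt) t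

theorem hasDerivAt_dirichletEnergy (hφ : ContDiff ℝ 2 (uncurry φ))
    (hper : ∀ t i, Periodic (fun x => φ x t) (EuclideanSpace.single i 1)) (t : ℝ) :
    HasDerivAt (fun s => ∫ x in Qcell d, ‖gradient (fun y => φ y s) x‖ ^ 2 / 2)
      (-∫ x in Qcell d, deriv (φ x) t * lap (fun y => φ y t) x) t := by
  have hφt : ContDiff ℝ 1 (uncurry fun x t => deriv (φ x) t) := contDiff_deriv_slice hφ
  have slice : ContDiff ℝ 2 fun x : Euc d => (x, t) := contDiff_id.prodMk contDiff_const
  have hφt_per (i : Fin d) : Periodic (fun x => deriv (φ x) t) (EuclideanSpace.single i 1) :=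
    fun x => congrArg (deriv · t) (funext fun s => hper s i x)
  have hgrad : Continuous (uncurry fun x t => gradient (fun y => φ y t) x) :=
    continuous_gradient_slice (hφ.of_le one_le_two)
  have pointwise (x : Euc d) (s : ℝ) :
      HasDerivAt (fun s => ‖gradient (fun y => φ y s) x‖ ^ 2 / 2)
        ⟪gradient (fun y => φ y s) x, gradient (fun y => deriv (φ y) s) x⟫ s := by
    simpa using (hasDerivAt_gradient_slice hφ x s).norm_sq.div_const 2
  have green := setIntegral_Qcell_mul_lap (u := fun x => φ x t) (v := fun x => deriv (φ x) t)
    (hφ.comp slice) (hφt.comp (slice.of_le one_le_two)) (hper t) hφt_per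
  rw [green, neg_neg]
  refine hasDerivAt_setIntegral_Qcell
    (g' := fun x s => ⟪gradient (fun y => φ y s) x, gradient (fun y => deriv (φ y) s) x⟫)
    (fun s => ?_) (hgrad.inner (continuous_gradient_slice hφt)) pointwise t
  exact ((hgrad.comp (Continuous.prodMk_left s)).norm.pow 2).div_const 2

theorem surfaceEnergy_eq_dirichlet_add_potential (ε : ℝ) (hV : Continuous V) {u : Euc d → ℝ}
    (hu : ContDiff ℝ 1 u) :
    surfaceEnergy V ε u =
      ε * (∫ x in Qcell d, ‖gradient u x‖ ^ 2 / 2) + (∫ x in Qcell d, V (u x)) / ε := by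
  have integrable_gradient : IntegrableOn (fun x => ε * (‖gradient u x‖ ^ 2 / 2)) (Qcell d) :=
    integrableOn_Qcell ((((continuous_gradient hu).norm.pow 2).div_const 2).const_mul ε)
  have integrable_potential : IntegrableOn (fun x => V (u x) / ε) (Qcell d) :=
    integrableOn_Qcell ((hV.comp hu.continuous).div_const ε)
  simp only [surfaceEnergy, mul_div_assoc]
  rw [integral_add integrable_gradient integrable_potential, integral_const_mul,
    integral_div ε]

theorem hasDerivAt_surfaceEnergy (ε : ℝ) (hφ : ContDiff ℝ 2 (uncurry φ))
    (hper : ∀ t i, Periodic (fun x => φ x t) (EuclideanSpace.single i 1))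
    (hV : ∀ s, HasDerivAt V (V' s) s) (hV' : Continuous V') (t : ℝ) :
    HasDerivAt (fun s => surfaceEnergy V ε fun y => φ y s)
      (ε * (-∫ x in Qcell d, deriv (φ x) t * lap (fun y => φ y t) x) +
        (∫ x in Qcell d, V' (φ x t) * deriv (φ x) t) / ε) t := by
  have hφ1 : ContDiff ℝ 1 (uncurry φ) := hφ.of_le one_le_two
  have hV_cont : Continuous V := continuous_iff_continuousAt.2 fun s => (hV s).continuousAt
  have slice (s : ℝ) : ContDiff ℝ 1 fun y => φ y s := hφ1.comp (contDiff_id.prodMk contDiff_const)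
  simp only [surfaceEnergy_eq_dirichlet_add_potential ε hV_cont (slice _)]
  exact ((hasDerivAt_dirichletEnergy hφ hper t).const_mul ε).add
    ((hasDerivAt_setIntegral_Qcell_comp hφ1 hV hV' t).div_const ε)

theorem hasDerivAt_penalty (hε : 0 < ε) (hφ : ContDiff ℝ 1 (uncurry φ))
    (hk : ∀ s, HasDerivAt k (g s) s) (hg : Continuous g)
    (hlam : ∀ t, lam t = ε ^ (-α) *
      ((∫ x in Qcell d, k (φ x 0)) - (∫ x in Qcell d, k (φ x t)))) (t : ℝ) :
    HasDerivAt (fun s => ε ^ α / 2 * lam s ^ 2)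
      (-(lam t * ∫ x in Qcell d, g (φ x t) * deriv (φ x) t)) t := by
  have hlam' : HasDerivAt lam
      (ε ^ (-α) * -∫ x in Qcell d, g (φ x t) * deriv (φ x) t) t :=
    (((hasDerivAt_setIntegral_Qcell_comp hφ hk hg t).const_sub _).const_mul _).congr_of_eventuallyEq
      (.of_forall hlam)
  have hpow : ε ^ α * ε ^ (-α) = 1 := by rw [← Real.rpow_add hε, add_neg_cancel, Real.rpow_zero]
  refine ((hlam'.pow 2).const_mul (ε ^ α / 2)).congr_deriv ?_
  push_cast
  linear_combination (-lam t * ∫ x in Qcell d, g (φ x t) * deriv (φ x) t) * hpow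

theorem setIntegral_Qcell_sq_deriv_of_allenCahn {c t : ℝ} (hφ : ContDiff ℝ 2 (uncurry φ))
    (hV' : Continuous V') (hg : Continuous g)
    (hPDE : ∀ x, ε * deriv (φ x) t =
      ε * lap (fun y => φ y t) x - V' (φ x t) / ε + c * g (φ x t)) :
    ε * ∫ x in Qcell d, deriv (φ x) t ^ 2 =
      ε * (∫ x in Qcell d, deriv (φ x) t * lap (fun y => φ y t) x) -
        (∫ x in Qcell d, V' (φ x t) * deriv (φ x) t) / ε +
        c * ∫ x in Qcell d, g (φ x t) * deriv (φ x) t := by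
  have slice : ContDiff ℝ 2 fun x : Euc d => (x, t) := contDiff_id.prodMk contDiff_const
  have hu : ContDiff ℝ 2 fun x => φ x t := hφ.comp slice
  have hu' : Continuous fun x => deriv (φ x) t :=
    (contDiff_deriv_slice (n := 1) hφ).continuous.comp slice.continuous
  have integrable_lap : IntegrableOn
      (fun x => ε * (deriv (φ x) t * lap (fun y => φ y t) x)) (Qcell d) :=
    integrableOn_Qcell ((hu'.mul (continuous_lap hu)).const_mul ε)
  have integrable_V' : IntegrableOn (fun x => V' (φ x t) * deriv (φ x) t / ε) (Qcell d) :=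
    integrableOn_Qcell (((hV'.comp hu.continuous).mul hu').div_const ε)
  have integrable_g : IntegrableOn (fun x => c * (g (φ x t) * deriv (φ x) t)) (Qcell d) :=
    integrableOn_Qcell (((hg.comp hu.continuous).mul hu').const_mul c)
  rw [← integral_const_mul, ← integral_const_mul, ← integral_const_mul, ← integral_div,
    ← integral_sub integrable_lap integrable_V', ← integral_add ?_ integrable_g]
  · congr with x
    linear_combination deriv (φ x) t * hPDE x
  · exact integrable_lap.sub integrable_V'

theorem penalizedEnergy_add_dissipation_eq {s t : ℝ} (hst : s ≤ t) (hε : 0 < ε)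
    (hφ : ContDiff ℝ 2 (uncurry φ))
    (hper : ∀ t i, Periodic (fun x => φ x t) (EuclideanSpace.single i 1))
    (hV : ∀ s, HasDerivAt V (V' s) s) (hV' : Continuous V')
    (hk : ∀ s, HasDerivAt k (g s) s) (hg : Continuous g)
    (hlam : ∀ t, lam t = ε ^ (-α) *
      ((∫ x in Qcell d, k (φ x 0)) - (∫ x in Qcell d, k (φ x t))))
    (hPDE : ∀ x, ∀ r ∈ Set.Ioo s t, ε * deriv (φ x) r =
      ε * lap (fun y => φ y r) x - V' (φ x r) / ε + lam r * g (φ x r)) :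
    penalizedEnergy V ε α φ lam t + ε * (∫ r in s..t, ∫ x in Qcell d, deriv (φ x) r ^ 2) =
      penalizedEnergy V ε α φ lam s := by
  have hE r := (hasDerivAt_surfaceEnergy ε hφ hper hV hV' r).add
    (hasDerivAt_penalty hε (hφ.of_le one_le_two) hk hg hlam r)
  have hE_cont : ContinuousOn (penalizedEnergy V ε α φ lam) (Set.Icc s t) :=
    fun r _ => (hE r).continuousAt.continuousWithinAt
  have hE' : ∀ r ∈ Set.Ioo s t, HasDerivAt (penalizedEnergy V ε α φ lam)
      (-ε * ∫ x in Qcell d, deriv (φ x) r ^ 2) r := fun r hr =>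
    (hE r).congr_deriv (by
      linear_combination setIntegral_Qcell_sq_deriv_of_allenCahn hφ hV' hg fun x => hPDE x r hr)
  have dissipation_cont : Continuous fun r => ∫ x in Qcell d, deriv (φ x) r ^ 2 :=
    continuous_setIntegral_Qcell (g := fun x r => deriv (φ x) r ^ 2)
      ((contDiff_deriv_slice (n := 1) hφ).continuous.pow 2)
  have hFTC := intervalIntegral.integral_eq_sub_of_hasDerivAt_of_le hst hE_cont hE'
    ((dissipation_cont.const_mul _).intervalIntegrable s t)
  rw [intervalIntegral.integral_const_mul] at hFTC
  linarith

end Energy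

section DoubleWell

theorem W_nonneg (s : ℝ) : 0 ≤ W s := by
  unfold W
  positivity

theorem hasDerivAt_W (s : ℝ) : HasDerivAt W (Wp s) s := by
  refine ((((hasDerivAt_pow 2 s).const_sub 1).pow 2).div_const 2).congr_deriv ?_
  simp only [Wp, Nat.cast_ofNat]
  ring

theorem continuous_Wp : Continuous Wp := by
  unfold Wp
  fun_prop

theorem continuous_sqrt_two_mul_W : Continuous fun s => √(2 * W s) := by
  unfold W
  fun_prop

theorem hasDerivAt_kfun (s : ℝ) : HasDerivAt kfun (√(2 * W s)) s :=
  intervalIntegral.integral_hasDerivAt_right (continuous_sqrt_two_mul_W.intervalIntegrable _ _)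
    (continuous_sqrt_two_mul_W.stronglyMeasurableAtFilter _ _)
    continuous_sqrt_two_mul_W.continuousAt

end DoubleWell

theorem stmt1_general {d : ℕ} {T ε α : ℝ} (hT : 0 ≤ T) (hε : 0 < ε) {V V' k g : ℝ → ℝ}
    (hV_nonneg : ∀ s, 0 ≤ V s) (hV : ∀ s, HasDerivAt V (V' s) s) (hV' : Continuous V')
    (hk : ∀ s, HasDerivAt k (g s) s) (hg : Continuous g)
    {φ : Euc d → ℝ → ℝ} (hφ : ContDiff ℝ 2 (uncurry φ))
    (hper : ∀ t i, Periodic (fun x => φ x t) (EuclideanSpace.single i 1))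
    {lam : ℝ → ℝ}
    (hlam : ∀ t, lam t = ε ^ (-α) *
      ((∫ x in Qcell d, k (φ x 0)) - (∫ x in Qcell d, k (φ x t))))
    (hPDE : ∀ x, ∀ t ∈ Set.Ioo 0 T, ε * deriv (φ x) t =
      ε * lap (fun y => φ y t) x - V' (φ x t) / ε + lam t * g (φ x t)) :
    AntitoneOn (penalizedEnergy V ε α φ lam) (Set.Icc 0 T) ∧
    ε * (∫ t in (0 : ℝ)..T, ∫ x in Qcell d, deriv (φ x) t ^ 2) ≤
      penalizedEnergy V ε α φ lam 0 ∧
    ∀ t ∈ Set.Icc 0 T,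
      |lam t| ≤ ε ^ (-(α / 2)) * √(2 * penalizedEnergy V ε α φ lam 0) := by
  have balance {s t : ℝ} (hs : 0 ≤ s) (hst : s ≤ t) (ht : t ≤ T) :=
    penalizedEnergy_add_dissipation_eq hst hε hφ hper hV hV' hk hg hlam
      fun x r hr => hPDE x r ⟨hs.trans_lt hr.1, hr.2.trans_le ht⟩
  have antitone : AntitoneOn (penalizedEnergy V ε α φ lam) (Set.Icc 0 T) := by
    intro s hs t ht hst
    have dissipation_nonneg : 0 ≤ ∫ r in s..t, ∫ x in Qcell d, deriv (φ x) r ^ 2 :=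
      intervalIntegral.integral_nonneg hst fun r _ => integral_nonneg fun x => sq_nonneg _
    linarith [balance hs.1 hst ht.2, mul_nonneg hε.le dissipation_nonneg]
  refine ⟨antitone, ?_, fun t ht => ?_⟩
  · exact (le_add_of_nonneg_left (penalizedEnergy_nonneg hε.le hV_nonneg T)).trans_eq
      (balance le_rfl hT le_rfl)
  · exact abs_le_rpow_mul_sqrt_of_penalty_le hε <|
      (penalty_le_penalizedEnergy hε.le hV_nonneg t).trans (antitone ⟨le_rfl, hT⟩ ht ht.1)

/-- energy monotonicity and a priori bounds for the nonlocal
Allen–Cahn equation. -/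
theorem stmt1 (d : ℕ) (hd : 2 ≤ d) (T ε α : ℝ) (hT : 0 < T) (hε : 0 < ε)
    (hα : α ∈ Set.Ioo (0:ℝ) 1)
    (φ : Euc d → ℝ → ℝ)
    (hφ : ContDiff ℝ (⊤ : ℕ∞) (Function.uncurry φ))
    (hper : ∀ (x : Euc d) (z : Fin d → ℤ) (t : ℝ),
      φ (x + (WithLp.equiv 2 (Fin d → ℝ)).symm fun i => (z i : ℝ)) t = φ x t)
    (lam : ℝ → ℝ)
    (hlam : ∀ t, lam t = ε ^ (-α) *
      ((∫ x in Qcell d, kfun (φ x 0)) - (∫ x in Qcell d, kfun (φ x t))))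
    (hPDE : ∀ (x : Euc d), ∀ t ∈ Set.Ioo (0:ℝ) T,
      ε * deriv (φ x) t =
        ε * lap (fun y => φ y t) x - Wp (φ x t) / ε + lam t * Real.sqrt (2 * W (φ x t))) :
    AntitoneOn (Eeps d ε α φ lam) (Set.Icc 0 T) ∧
    ε * (∫ t in (0:ℝ)..T, ∫ x in Qcell d, (deriv (φ x) t) ^ 2) ≤ Eeps d ε α φ lam 0 ∧
    ∀ t ∈ Set.Icc (0:ℝ) T, |lam t| ≤ ε ^ (-(α / 2)) * Real.sqrt (2 * Eeps d ε α φ lam 0) := by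
  exact stmt1_general hT.le hε W_nonneg hasDerivAt_W continuous_Wp hasDerivAt_kfun
    continuous_sqrt_two_mul_W (contDiff_infty.1 hφ 2)
    (fun t => periodic_single_of_periodic_int fun x z => hper x z t) hlam hPDE
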